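/- Let X be a set, let 𝒰 be a set of ultrafilters on X, let m ≥ 1 and r ≥ 1 be natural numbers, let S be a 𝒰-fat tree of height m, and let c be a function assigning to each length-m element of S one of r colors. Then there exist a color i and a 𝒰-fat tree S' ⊆ S of height m such that every length-m element of S' has color i. -/

import Mathlib

/-!
The proof is by induction on the height, peeling off the root. If `W ∈ 𝒰` contains the successor
set `A` of the root, then for `x ∈ A` the tree above `[x]` is fat of height one less, so by
induction it has a monochromatic fat subtree `T x`, of color `f x` say. The ultrafilter `W`
concentrates on one fiber of `f`, as there are finitely many colors; gluing the `T x` for `x ∈ A`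
in that fiber below a common root gives the required subtree.
-/

universe u

/-- A `𝒰`-fat tree of height `m`: a set of finite sequences of elements of `X`,
each of length at most `m`, containing the empty sequence, closed under initial
segments, and such that the successor set of every node of length `< m` belongs
to some ultrafilter `W ∈ 𝒰`. -/
def IsFatTree {X : Type u} (𝒰 : Set (Ultrafilter X)) (m : ℕ)
    (S : Set (List X)) : Prop :=
  ([] ∈ S) ∧
  (∀ s ∈ S, s.length ≤ m) ∧
  (∀ s ∈ S, ∀ t : List X, t <+: s → t ∈ S) ∧
  (∀ s ∈ S, s.length < m → ∃ W ∈ 𝒰, {x : X | s ++ [x] ∈ S} ∈ W)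

/-- The part of a fat tree above a node of length one, with that node removed, is a fat tree. -/
lemma IsFatTree.above {X : Type u} {𝒰 : Set (Ultrafilter X)} {m : ℕ} {S : Set (List X)}
    (hS : IsFatTree 𝒰 (m + 1) S) {x : X} (hx : [x] ∈ S) :
    IsFatTree 𝒰 m {t | x :: t ∈ S} := by
  obtain ⟨-, hlen, hpre, hsuc⟩ := hS
  refine ⟨hx, fun s hs => ?_, fun s hs t ht => ?_, fun s hs hl => ?_⟩
  · simpa using hlen _ hs
  · exact hpre _ hs _ ((List.prefix_cons_inj x).2 ht)
  · simpa using hsuc _ hs (by simpa using hl)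

/-- Fat trees `T x` of height `m`, for `x` in a set `B` of some `W ∈ 𝒰`, glue to a fat tree of
height `m + 1`. -/
lemma IsFatTree.glue {X : Type u} {𝒰 : Set (Ultrafilter X)} {m : ℕ} {W : Ultrafilter X}
    (hW : W ∈ 𝒰) {B : Set X} (hB : B ∈ W) {T : X → Set (List X)}
    (hT : ∀ x ∈ B, IsFatTree 𝒰 m (T x)) :
    IsFatTree 𝒰 (m + 1) {s | s = [] ∨ ∃ x ∈ B, ∃ t ∈ T x, s = x :: t} := by
  refine ⟨Or.inl rfl, ?_, ?_, ?_⟩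
  · rintro s (rfl | ⟨x, hx, t, ht, rfl⟩)
    · simp
    · simpa using (hT x hx).2.1 t ht
  · rintro s (rfl | ⟨x, hx, t, ht, rfl⟩) u hu
    · exact Or.inl (List.prefix_nil.1 hu)
    · rcases List.prefix_cons_iff.1 hu with rfl | ⟨v, rfl, hv⟩
      · exact Or.inl rfl
      · exact Or.inr ⟨x, hx, v, (hT x hx).2.2.1 t ht v hv, rfl⟩
  · rintro s (rfl | ⟨x, hx, t, ht, rfl⟩) hl
    · exact ⟨W, hW, Filter.mem_of_superset hB fun x hx =>
        Or.inr ⟨x, hx, [], (hT x hx).1, rfl⟩⟩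
    · obtain ⟨V, hV, hmem⟩ := (hT x hx).2.2.2 t ht (by simpa using hl)
      exact ⟨V, hV, Filter.mem_of_superset hmem fun y hy =>
        Or.inr ⟨x, hx, t ++ [y], hy, rfl⟩⟩

/-- Given a `𝒰`-fat tree `S` of height `m ≥ 1` and a coloring of its length-`m`
elements in `r ≥ 1` colors, there is a `𝒰`-fat subtree `S' ⊆ S` of height `m`
all of whose length-`m` elements get the same color. -/
theorem fatTree_homogeneous
    {X : Type u} (𝒰 : Set (Ultrafilter X)) (m r : ℕ)
    (hm : 1 ≤ m) (hr : 1 ≤ r)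
    (S : Set (List X)) (hS : IsFatTree 𝒰 m S)
    (c : List X → Fin r) :
    ∃ (i : Fin r) (S' : Set (List X)), S' ⊆ S ∧ IsFatTree 𝒰 m S' ∧
      ∀ s ∈ S', s.length = m → c s = i := by
  clear hm hr
  induction m generalizing S c with
  | zero =>
    exact ⟨c [], S, subset_rfl, hS, fun s hs hl => by rw [List.length_eq_zero_iff.1 hl]⟩
  | succ m ih =>
    obtain ⟨W, hW, hA⟩ := hS.2.2.2 [] hS.1 (by simp)
    -- The premise `[x] ∈ S` is put under the existentials so that `f` and `T` are total functions.
    have key : ∀ x : X, ∃ (i : Fin r) (T : Set (List X)), [x] ∈ S →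
        T ⊆ {t | x :: t ∈ S} ∧ IsFatTree 𝒰 m T ∧
          ∀ t ∈ T, t.length = m → c (x :: t) = i := by
      intro x
      by_cases hx : [x] ∈ S
      · obtain ⟨i, T, h⟩ := ih _ (hS.above hx) (fun t => c (x :: t))
        exact ⟨i, T, fun _ => h⟩
      · exact ⟨c [], ∅, fun h => absurd h hx⟩
    choose f T hT using key
    -- The pushforward of `W` to the finite set of colors is principal.
    obtain ⟨i, hi⟩ := (W.map f).eq_pure_of_finite
    have hf : f ⁻¹' {i} ∈ W := by
      rw [← Ultrafilter.mem_map, hi]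
      exact Ultrafilter.mem_pure.2 rfl
    have hB : {x | [x] ∈ S} ∩ f ⁻¹' {i} ∈ W := Filter.inter_mem hA hf
    refine ⟨i, _, ?_, IsFatTree.glue hW hB fun x hx => (hT x hx.1).2.1, ?_⟩
    · rintro s (rfl | ⟨x, hx, t, ht, rfl⟩)
      · exact hS.1
      · exact (hT x hx.1).1 ht
    · rintro s (rfl | ⟨x, hx, t, ht, rfl⟩) hl
      · simp at hl
      · exact ((hT x hx.1).2.2 t ht (by simpa using hl)).trans hx.2
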